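/- For every α ∈ (0,1), every nonuniform time mesh, and all indices k ≥ 3 and 2 ≤ j ≤ k−1, the quantities d_j^k = c_{j−1}^k − a_j^k satisfy d_j^{k+1} − d_j^k < 0. -/

import Mathlib

open MeasureTheory Real Finset

noncomputable section

/-- Time step `τ_j = t_j - t_{j-1}`. -/
def tau (t : ℕ → ℝ) (j : ℕ) : ℝ := t j - t (j - 1)

/-- Step ratio `ρ_j = τ_j / τ_{j-1}`. -/
def rho (t : ℕ → ℝ) (j : ℕ) : ℝ := tau t j / tau t (j - 1)

/-- Offset node `t_k^* = t_{k-1} + σ τ_k` with `σ = 1 - α/2`. -/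
def tstar (α : ℝ) (t : ℕ → ℝ) (k : ℕ) : ℝ := t (k - 1) + (1 - α / 2) * tau t k

/-- L2-1_σ coefficient `a_j^k`. -/
def acoef (α : ℝ) (t : ℕ → ℝ) (j k : ℕ) : ℝ :=
  ∫ θ in (0:ℝ)..1,
    (-2 * tau t j * (1 - θ) - tau t (j + 1)) /
      ((tau t j + tau t (j + 1)) * (tstar α t k - (t (j - 1) + θ * tau t j)) ^ α)

/-- L2-1_σ coefficient `c_j^k`. -/
def ccoef (α : ℝ) (t : ℕ → ℝ) (j k : ℕ) : ℝ :=
  ∫ θ in (0:ℝ)..1,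
    (tau t j ^ 2 * (2 * θ - 1)) /
      (tau t (j + 1) * (tau t j + tau t (j + 1)) *
        (tstar α t k - (t (j - 1) + θ * tau t j)) ^ α)

/-- `d_j^k = c_{j-1}^k - a_j^k`. -/
def dcoef (α : ℝ) (t : ℕ → ℝ) (j k : ℕ) : ℝ := ccoef α t (j - 1) k - acoef α t j k

/-- The lower-triangular L2-1_σ matrix `M` (entries vanish above the diagonal and
for column index `0`). -/
def Mentry (α : ℝ) (t : ℕ → ℝ) (k j : ℕ) : ℝ :=
  if j = 0 ∨ k < j then 0
  else if j = k then ccoef α t (k - 1) k + (1 - α / 2) ^ (1 - α) / ((1 - α) * tau t k ^ α)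
  else if j = 1 then -acoef α t 1 k
  else dcoef α t j k

end

/-!
On the `j`-th cell the singular kernel is `K_k θ = (t_k^* - (t_{j-1} + θ τ_j))^{-α}`. Passing from
`k` to `k + 1` moves `t_k^*` to the right, away from the cell.

* The weight of `a_j^k` is negative and `K_{k+1} < K_k`, so `a_j^k` strictly increases.
* The weight `2θ - 1` of `c_j^k` is odd about the midpoint and, `x ↦ x^{-α}` being convex,
  `K_{k+1} - K_k` is decreasing in `θ`, so `c_j^k` does not increase.
-/

theorem map_add_sub_map_le_of_convexOn {𝕜 : Type*} [Field 𝕜] [LinearOrder 𝕜]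
    [IsStrictOrderedRing 𝕜] {s : Set 𝕜} {f : 𝕜 → 𝕜} (hf : ConvexOn 𝕜 s f) {x y δ : 𝕜}
    (hx : x ∈ s) (hy : y + δ ∈ s) (hxy : x ≤ y) (hδ : 0 ≤ δ) :
    f (x + δ) - f x ≤ f (y + δ) - f y := by
  rcases hδ.eq_or_lt with rfl | hδ
  · simp only [add_zero, sub_self, le_refl]
  have hw : 0 < (y - x) + δ := by linarith
  set p := (y - x) / ((y - x) + δ)
  set q := δ / ((y - x) + δ)
  have hp : 0 ≤ p := div_nonneg (sub_nonneg.2 hxy) hw.le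
  have hq : 0 ≤ q := div_nonneg hδ.le hw.le
  have hpq : p + q = 1 := by rw [← add_div, div_self hw.ne']
  have hqw : q * ((y - x) + δ) = δ := div_mul_cancel₀ _ hw.ne'
  have hx_add : p • x + q • (y + δ) = x + δ := by
    simp only [smul_eq_mul]; linear_combination x * hpq + hqw
  have hy_eq : q • x + p • (y + δ) = y := by
    simp only [smul_eq_mul]; linear_combination (y + δ) * hpq - hqw
  have h₁ := hf.2 hx hy hp hq hpq
  have h₂ := hf.2 hx hy hq hp ((add_comm q p).trans hpq)
  rw [hx_add, smul_eq_mul, smul_eq_mul] at h₁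
  rw [hy_eq, smul_eq_mul, smul_eq_mul] at h₂
  linear_combination h₁ + h₂ + (f x + f (y + δ)) * hpq

theorem convexOn_rpow_of_nonpos {p : ℝ} (hp : p ≤ 0) :
    ConvexOn ℝ (Set.Ioi 0) fun x : ℝ ↦ x ^ p := by
  have hderiv : ∀ x ∈ Set.Ioi (0 : ℝ), HasDerivAt (fun x : ℝ ↦ x ^ p) (p * x ^ (p - 1)) x :=
    fun x hx ↦ hasDerivAt_rpow_const (Or.inl (ne_of_gt hx))
  refine MonotoneOn.convexOn_of_deriv (convex_Ioi 0)
    (fun x hx ↦ (hderiv x hx).continuousAt.continuousWithinAt) ?_ ?_ <;> rw [interior_Ioi]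
  · exact fun x hx ↦ (hderiv x hx).differentiableAt.differentiableWithinAt
  · intro x hx y hy hxy
    rw [(hderiv x hx).deriv, (hderiv y hy).deriv]
    exact mul_le_mul_of_nonpos_left (rpow_le_rpow_of_nonpos hx hxy (by linarith)) hp

theorem convexOn_inv_rpow {α : ℝ} (hα : 0 ≤ α) :
    ConvexOn ℝ (Set.Ioi 0) fun x : ℝ ↦ (x ^ α)⁻¹ :=
  (convexOn_rpow_of_nonpos (neg_nonpos.2 hα)).congr fun _ hx ↦ rpow_neg (le_of_lt hx) α

theorem integral_sub_midpoint_mul_nonpos {g : ℝ → ℝ} {a b : ℝ} (hab : a ≤ b)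
    (hg : AntitoneOn g (Set.Icc a b)) :
    ∫ x in a..b, (x - (a + b) / 2) * g x ≤ 0 := by
  set m := (a + b) / 2 with hm
  have hmem : m ∈ Set.Icc a b := ⟨by linarith, by linarith⟩
  have hint : IntervalIntegrable g volume a b :=
    AntitoneOn.intervalIntegrable (by rwa [Set.uIcc_of_le hab])
  have hle : ∀ x ∈ Set.Icc a b, (x - m) * g x ≤ (x - m) * g m := fun x hx ↦ by
    rcases le_total x m with hxm | hmx
    · exact mul_le_mul_of_nonpos_left (hg hx hmem hxm) (sub_nonpos.2 hxm)
    · exact mul_le_mul_of_nonneg_left (hg hmem hx hmx) (sub_nonneg.2 hmx)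
  calc ∫ x in a..b, (x - m) * g x
      ≤ ∫ x in a..b, (x - m) * g m :=
        intervalIntegral.integral_mono_on hab (hint.continuousOn_mul (by fun_prop))
          (Continuous.intervalIntegrable (by fun_prop) a b) hle
    _ = 0 := by
        rw [intervalIntegral.integral_mul_const, intervalIntegral.integral_sub (by simp) (by simp),
          integral_id, intervalIntegral.integral_const, smul_eq_mul, hm]
        ring

/-- The singular kernel `s ↦ (t_k^* - s)^{-α}` on the cell `[t_{j-1}, t_j]`, as a function of
`θ ∈ [0, 1]` through `s = t_{j-1} + θ τ_j`. The power is inverted rather than taken with exponent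
`-α`, so that the formulas of `acoef` and `ccoef` hold even where the base is negative. -/
noncomputable def cellKernel (α : ℝ) (t : ℕ → ℝ) (j k : ℕ) (θ : ℝ) : ℝ :=
  ((tstar α t k - (t (j - 1) + θ * tau t j)) ^ α)⁻¹

theorem acoef_eq_integral_cellKernel (α : ℝ) (t : ℕ → ℝ) (j k : ℕ) :
    acoef α t j k = (tau t j + tau t (j + 1))⁻¹ *
      ∫ θ in (0 : ℝ)..1, (-2 * tau t j * (1 - θ) - tau t (j + 1)) * cellKernel α t j k θ := by
  rw [acoef, ← intervalIntegral.integral_const_mul]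
  refine intervalIntegral.integral_congr fun θ _ ↦ ?_
  simp only [cellKernel, div_eq_mul_inv, mul_inv]
  ring

theorem ccoef_eq_integral_cellKernel (α : ℝ) (t : ℕ → ℝ) (j k : ℕ) :
    ccoef α t j k = 2 * tau t j ^ 2 / (tau t (j + 1) * (tau t j + tau t (j + 1))) *
      ∫ θ in (0 : ℝ)..1, (θ - (0 + 1) / 2) * cellKernel α t j k θ := by
  rw [ccoef, ← intervalIntegral.integral_const_mul]
  refine intervalIntegral.integral_congr fun θ _ ↦ ?_
  simp only [cellKernel, div_eq_mul_inv, mul_inv]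
  ring

section Mesh

variable {α θ : ℝ} {t : ℕ → ℝ} {j k : ℕ}

theorem tau_pos (ht : StrictMono t) (hj : 1 ≤ j) : 0 < tau t j :=
  sub_pos.2 (ht (Nat.sub_lt hj one_pos))

theorem lt_tstar (hα : α < 2) (ht : StrictMono t) (hk : 1 ≤ k) : t (k - 1) < tstar α t k :=
  lt_add_of_pos_right _ (mul_pos (by linarith) (tau_pos ht hk))

theorem tstar_lt (hα : 0 < α) (ht : StrictMono t) (hk : 1 ≤ k) : tstar α t k < t k := by
  have hατ : 0 < α * tau t k := mul_pos hα (tau_pos ht hk)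
  unfold tstar tau at *
  linarith

theorem tstar_lt_tstar_succ (hα : α ∈ Set.Ioo 0 2) (ht : StrictMono t) (hk : 1 ≤ k) :
    tstar α t k < tstar α t (k + 1) :=
  (tstar_lt hα.1 ht hk).trans (lt_tstar hα.2 ht (Nat.le_add_left 1 k))

theorem tstar_sub_cell_pos (hα : α < 2) (ht : StrictMono t) (hj : 1 ≤ j) (hjk : j < k)
    (hθ : θ ≤ 1) : 0 < tstar α t k - (t (j - 1) + θ * tau t j) :=
  sub_pos.2 <| calc
    t (j - 1) + θ * tau t j ≤ t (j - 1) + tau t j :=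
      add_le_add_right (mul_le_of_le_one_left (tau_pos ht hj).le hθ) _
    _ = t j := add_sub_cancel _ _
    _ ≤ t (k - 1) := ht.monotone (Nat.le_sub_one_of_lt hjk)
    _ < tstar α t k := lt_tstar hα ht (by omega)

theorem cellKernel_succ_lt (hα : α ∈ Set.Ioo 0 2) (ht : StrictMono t) (hj : 1 ≤ j) (hjk : j < k)
    (hθ : θ ≤ 1) : cellKernel α t j (k + 1) θ < cellKernel α t j k θ := by
  have hpos := tstar_sub_cell_pos hα.2 ht hj hjk hθ
  exact inv_strictAnti₀ (rpow_pos_of_pos hpos α) <| rpow_lt_rpow hpos.le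
    (sub_lt_sub_right (tstar_lt_tstar_succ hα ht (by omega)) _) hα.1

theorem monotoneOn_cellKernel (hα : α ∈ Set.Ioo 0 2) (ht : StrictMono t) (hj : 1 ≤ j)
    (hjk : j < k) : MonotoneOn (cellKernel α t j k) (Set.Icc 0 1) := by
  intro θ _ φ hφ hθφ
  have hpos := tstar_sub_cell_pos hα.2 ht hj hjk hφ.2
  have hτ := (tau_pos ht hj).le
  exact inv_anti₀ (rpow_pos_of_pos hpos α) (rpow_le_rpow hpos.le (by gcongr) hα.1.le)

theorem intervalIntegrable_mul_cellKernel {w : ℝ → ℝ} (hw : Continuous w)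
    (hα : α ∈ Set.Ioo 0 2) (ht : StrictMono t) (hj : 1 ≤ j) (hjk : j < k) :
    IntervalIntegrable (fun θ ↦ w θ * cellKernel α t j k θ) volume 0 1 := by
  have hmono := monotoneOn_cellKernel hα ht hj hjk
  rw [← Set.uIcc_of_le zero_le_one] at hmono
  exact hmono.intervalIntegrable.continuousOn_mul hw.continuousOn

theorem antitoneOn_cellKernel_succ_sub (hα : α ∈ Set.Ioo 0 2) (ht : StrictMono t) (hj : 1 ≤ j)
    (hjk : j < k) :
    AntitoneOn (fun θ ↦ cellKernel α t j (k + 1) θ - cellKernel α t j k θ) (Set.Icc 0 1) := by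
  intro θ hθ φ hφ hθφ
  have hτ := (tau_pos ht hj).le
  have hshift (s : ℝ) : tstar α t k - s + (tstar α t (k + 1) - tstar α t k) =
      tstar α t (k + 1) - s := by ring
  have hpos_succ := tstar_sub_cell_pos hα.2 ht hj (Nat.lt_succ_of_lt hjk) hθ.2
  have hincr := map_add_sub_map_le_of_convexOn (convexOn_inv_rpow hα.1.le)
    (tstar_sub_cell_pos hα.2 ht hj hjk hφ.2) (by rwa [hshift, Set.mem_Ioi])
    (show tstar α t k - (t (j - 1) + φ * tau t j) ≤ tstar α t k - (t (j - 1) + θ * tau t j) by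
      gcongr)
    (sub_nonneg.2 (tstar_lt_tstar_succ hα ht (by omega)).le)
  simpa only [cellKernel, hshift] using hincr

theorem acoef_lt_acoef_succ (hα : α ∈ Set.Ioo 0 2) (ht : StrictMono t) (hj : 1 ≤ j)
    (hjk : j < k) : acoef α t j k < acoef α t j (k + 1) := by
  have hτ := tau_pos ht hj
  have hτ' := tau_pos ht (Nat.le_add_left 1 j)
  set w : ℝ → ℝ := fun θ ↦ -2 * tau t j * (1 - θ) - tau t (j + 1)
  have hw : Continuous w := by fun_prop
  have hw_neg : ∀ θ ≤ 1, w θ < 0 := fun θ hθ ↦ by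
    linarith [mul_nonneg hτ.le (sub_nonneg.2 hθ)]
  have hint := intervalIntegrable_mul_cellKernel hw hα ht hj hjk
  have hint' := intervalIntegrable_mul_cellKernel hw hα ht hj (Nat.lt_succ_of_lt hjk)
  rw [acoef_eq_integral_cellKernel, acoef_eq_integral_cellKernel]
  refine mul_lt_mul_of_pos_left ?_ (inv_pos.2 (add_pos hτ hτ'))
  rw [← sub_pos, ← intervalIntegral.integral_sub hint' hint]
  refine intervalIntegral.intervalIntegral_pos_of_pos_on (hint'.sub hint) (fun θ hθ ↦ ?_) one_pos
  exact sub_pos.2 (mul_lt_mul_of_neg_left (cellKernel_succ_lt hα ht hj hjk hθ.2.le)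
    (hw_neg θ hθ.2.le))

theorem ccoef_succ_le_ccoef (hα : α ∈ Set.Ioo 0 2) (ht : StrictMono t) (hj : 1 ≤ j)
    (hjk : j < k) : ccoef α t j (k + 1) ≤ ccoef α t j k := by
  have hτ := tau_pos ht hj
  have hτ' := tau_pos ht (Nat.le_add_left 1 j)
  have hw : Continuous fun θ : ℝ ↦ θ - (0 + 1) / 2 := by fun_prop
  have hint := intervalIntegrable_mul_cellKernel hw hα ht hj hjk
  have hint' := intervalIntegrable_mul_cellKernel hw hα ht hj (Nat.lt_succ_of_lt hjk)
  rw [ccoef_eq_integral_cellKernel, ccoef_eq_integral_cellKernel]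
  refine mul_le_mul_of_nonneg_left ?_ (by positivity)
  rw [← sub_nonpos, ← intervalIntegral.integral_sub hint' hint]
  simp only [← mul_sub]
  exact integral_sub_midpoint_mul_nonpos zero_le_one (antitoneOn_cellKernel_succ_sub hα ht hj hjk)

theorem dcoef_diff_k_neg_general (hα : α ∈ Set.Ioo 0 2) (ht : StrictMono t) (hj : 2 ≤ j)
    (hjk : j < k) : dcoef α t j (k + 1) - dcoef α t j k < 0 := by
  have hc : ccoef α t (j - 1) (k + 1) ≤ ccoef α t (j - 1) k :=
    ccoef_succ_le_ccoef hα ht (by omega) (by omega)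
  have ha : acoef α t j k < acoef α t j (k + 1) := acoef_lt_acoef_succ hα ht (by omega) hjk
  unfold dcoef
  linarith

end Mesh

/-- (P8): `d_j^{k+1} - d_j^k < 0` for `k ≥ 3`, `2 ≤ j ≤ k-1`. -/
theorem dcoef_diff_k_neg (α : ℝ) (hα : α ∈ Set.Ioo (0:ℝ) 1)
    (t : ℕ → ℝ) (ht0 : t 0 = 0) (hmono : StrictMono t)
    (k j : ℕ) (hk : 3 ≤ k) (hj1 : 2 ≤ j) (hj2 : j ≤ k - 1) :
    dcoef α t j (k + 1) - dcoef α t j k < 0 := by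
  exact dcoef_diff_k_neg_general ⟨hα.1, hα.2.trans one_lt_two⟩ hmono hj1 (by omega)
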